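/- arXiv:2003.01647 — 2 statements merged into one kernel-verified Lean document; each statement's English description precedes it below -/
import Mathlib

section
/- For n ≤ 3, any two n × n × n alternating sign hypermatrices A and B with L(A) = L(B) must be equal. -/
open Finset

/-- The nonzero entries of the sequence `f`, in order. -/
def nonzeroList {n : ℕ} (f : Fin n → ℤ) : List ℤ :=
  ((List.finRange n).map f).filter (· != 0)

/-- The nonzero entries of `f` alternate in sign, beginning and ending with `+1`. -/
def AltLine {n : ℕ} (f : Fin n → ℤ) : Prop :=
  nonzeroList f ≠ [] ∧
  (∀ i : ℕ, ∀ h : i < (nonzeroList f).length,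
      (nonzeroList f).get ⟨i, h⟩ = (-1 : ℤ) ^ i) ∧
  (nonzeroList f).getLast? = some 1

/-- Alternating sign matrix. -/
def IsASM {n : ℕ} (M : Fin n → Fin n → ℤ) : Prop :=
  (∀ i, AltLine (fun j => M i j)) ∧ (∀ j, AltLine (fun i => M i j))

/-- Alternating sign hypermatrix. -/
def IsASHM {n : ℕ} (A : Fin n → Fin n → Fin n → ℤ) : Prop :=
  (∀ j k, AltLine (fun i => A i j k)) ∧
  (∀ i k, AltLine (fun j => A i j k)) ∧
  (∀ i j, AltLine (fun k => A i j k))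

/-- The ASHL of an ASHM: `L(A)_{ij} = ∑ k·a_{ijk}` (planes indexed `1,…,n`). -/
def ashl {n : ℕ} (A : Fin n → Fin n → Fin n → ℤ) (i j : Fin n) : ℤ :=
  ∑ k : Fin n, ((k : ℕ) + 1 : ℤ) * A i j k

def tsign {n : ℕ} (a b x : Fin n) : ℤ :=
  if x = a then 1 else if x = b then -1 else 0

/-- The T-block `T_{i₁,j₁,k₁ : i₂,j₂,k₂}`. -/
def Tblock {n : ℕ} (i₁ i₂ j₁ j₂ k₁ k₂ : Fin n) (i j k : Fin n) : ℤ :=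
  tsign i₁ i₂ i * tsign j₁ j₂ j * tsign k₁ k₂ k

/-!
Every line of an ASHM sums to `1`, and its first and last entries are nonnegative. Fix `j`: the
plane `(a_{ijk})_{i,k}` is an alternating sign matrix whose first and last rows are nonnegative,
hence are standard unit vectors, and a unit vector is determined by the weighted sum recorded in
`L(A)`. When `n ≤ 3` at most one row of the plane remains, and the column sums determine it.
-/

section UnitVectors

variable {α : Type*} [Fintype α]

theorem exists_eq_single_of_nonneg_of_sum_eq_one [DecidableEq α] {f : α → ℤ} (hf : 0 ≤ f)
    (hsum : ∑ a, f a = 1) : ∃ p, f = Pi.single p 1 := by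
  obtain ⟨p, -, hp⟩ : ∃ p ∈ univ, f p ≠ 0 :=
    exists_ne_zero_of_sum_ne_zero (hsum ▸ one_ne_zero)
  have hle : Pi.single p 1 ≤ f := by
    intro a
    obtain rfl | ha := eq_or_ne a p
    · rw [Pi.single_eq_same]
      exact (hf a).lt_of_ne' hp
    · rw [Pi.single_eq_of_ne ha]
      exact hf a
  have hdiff : ∑ a, (f - Pi.single p (1 : ℤ) : α → ℤ) a = 0 := by
    simp only [Pi.sub_apply, sum_sub_distrib, hsum, Fintype.sum_pi_single', sub_self]
  exact ⟨p, sub_eq_zero.mp <| (Fintype.sum_eq_zero_iff_of_nonneg <| sub_nonneg.mpr hle).mp hdiff⟩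

theorem eq_of_nonneg_of_sum_smul_eq {G : Type*} [AddCommGroup G] {w : α → G}
    (hw : Function.Injective w) {f g : α → ℤ} (hf : 0 ≤ f) (hg : 0 ≤ g)
    (hfsum : ∑ a, f a = 1) (hgsum : ∑ a, g a = 1)
    (h : ∑ a, f a • w a = ∑ a, g a • w a) : f = g := by
  classical
  obtain ⟨p, rfl⟩ := exists_eq_single_of_nonneg_of_sum_eq_one hf hfsum
  obtain ⟨q, rfl⟩ := exists_eq_single_of_nonneg_of_sum_eq_one hg hgsum
  have hpq : w p = w q := by
    simpa only [Pi.single_apply, ite_smul, one_smul, zero_smul, sum_ite_eq', mem_univ, if_true]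
      using h
  rw [hw hpq]

end UnitVectors

theorem sum_nonzeroList {n : ℕ} (f : Fin n → ℤ) : (nonzeroList f).sum = ∑ i, f i := by
  rw [nonzeroList, List.sum_filter_bne_zero, ← List.ofFn_eq_map, List.sum_ofFn]

namespace AltLine

theorem odd_length_nonzeroList {n : ℕ} {f : Fin n → ℤ} (hf : AltLine f) :
    Odd (nonzeroList f).length := by
  obtain ⟨hne, halt, hlast⟩ := hf
  have hlt : (nonzeroList f).length - 1 < (nonzeroList f).length :=
    Nat.sub_one_lt (List.length_pos_iff.mpr hne).ne'
  have hpow : (-1 : ℤ) ^ ((nonzeroList f).length - 1) = 1 := by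
    rw [← halt _ hlt]
    rw [List.getLast?_eq_getElem?, List.getElem?_eq_getElem hlt] at hlast
    exact Option.some.inj hlast
  have heven := (neg_one_pow_eq_one_iff_even (by decide)).mp hpow
  rw [← Nat.sub_one_add_one (Nat.ne_zero_of_lt hlt)]
  exact heven.add_one

theorem sum_eq_one {n : ℕ} {f : Fin n → ℤ} (hf : AltLine f) : ∑ i, f i = 1 :=
  calc ∑ i, f i = ∑ i : Fin (nonzeroList f).length, (nonzeroList f).get i := by
        rw [← sum_nonzeroList, ← Fin.sum_univ_getElem]; rfl
    _ = ∑ i : Fin (nonzeroList f).length, (-1 : ℤ) ^ (i : ℕ) :=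
        sum_congr rfl fun i _ => hf.2.1 i i.isLt
    _ = 1 := by
        rw [Fin.sum_univ_eq_sum_range, neg_one_geom_sum,
          if_neg (Nat.not_even_iff_odd.mpr hf.odd_length_nonzeroList)]

theorem head?_nonzeroList {n : ℕ} {f : Fin n → ℤ} (hf : AltLine f) :
    (nonzeroList f).head? = some 1 := by
  have hpos : 0 < (nonzeroList f).length := List.length_pos_iff.mpr hf.1
  rw [List.head?_eq_getElem?, List.getElem?_eq_getElem hpos]
  exact congrArg some (hf.2.1 0 hpos)

theorem apply_zero_nonneg {n : ℕ} {f : Fin (n + 1) → ℤ} (hf : AltLine f) : 0 ≤ f 0 := by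
  by_cases h0 : f 0 = 0
  · exact h0.ge
  · have hhead : (nonzeroList f).head? = some (f 0) := by
      rw [nonzeroList, List.finRange_succ, List.map_cons,
        List.filter_cons_of_pos (by exact bne_iff_ne.mpr h0), List.head?_cons]
    have hone : f 0 = 1 := Option.some.inj (hhead.symm.trans hf.head?_nonzeroList)
    exact hone ▸ zero_le_one

theorem apply_last_nonneg {n : ℕ} {f : Fin (n + 1) → ℤ} (hf : AltLine f) :
    0 ≤ f (Fin.last n) := by
  by_cases h0 : f (Fin.last n) = 0
  · exact h0.ge
  · have hlast : (nonzeroList f).getLast? = some (f (Fin.last n)) := by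
      rw [nonzeroList, List.finRange_succ_last, List.map_append, List.filter_append,
        List.map_singleton, List.filter_cons_of_pos (by exact bne_iff_ne.mpr h0), List.filter_nil,
        List.getLast?_concat]
    have hone : f (Fin.last n) = 1 := Option.some.inj (hlast.symm.trans hf.2.2)
    exact hone ▸ zero_le_one

end AltLine

namespace IsASM

theorem eq_of_forall_row_ne {n : ℕ} {M N : Fin n → Fin n → ℤ} (hM : IsASM M) (hN : IsASM N)
    (i₀ : Fin n) (h : ∀ i ≠ i₀, M i = N i) : M = N := by
  suffices hrow : M i₀ = N i₀ by
    funext i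
    obtain rfl | hi := eq_or_ne i i₀
    exacts [hrow, h i hi]
  funext k
  have hcol : ∑ i, M i k = ∑ i, N i k := (hM.2 k).sum_eq_one.trans (hN.2 k).sum_eq_one.symm
  rw [← add_sum_erase _ _ (mem_univ i₀), ← add_sum_erase _ _ (mem_univ i₀),
    sum_congr rfl fun i hi => congrFun (h i (ne_of_mem_erase hi)) k] at hcol
  exact add_right_cancel hcol

theorem row_zero_nonneg {n : ℕ} {M : Fin (n + 1) → Fin (n + 1) → ℤ} (hM : IsASM M) : 0 ≤ M 0 :=
  fun k => (hM.2 k).apply_zero_nonneg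

theorem row_last_nonneg {n : ℕ} {M : Fin (n + 1) → Fin (n + 1) → ℤ} (hM : IsASM M) :
    0 ≤ M (Fin.last n) :=
  fun k => (hM.2 k).apply_last_nonneg

theorem eq_of_sum_smul_eq {n : ℕ} (hn : n ≤ 3) {G : Type*} [AddCommGroup G] {w : Fin n → G}
    (hw : Function.Injective w) {M N : Fin n → Fin n → ℤ} (hM : IsASM M) (hN : IsASM N)
    (h : ∀ i, ∑ k, M i k • w k = ∑ k, N i k • w k) : M = N := by
  have row_eq (i : Fin n) (hMi : 0 ≤ M i) (hNi : 0 ≤ N i) : M i = N i :=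
    eq_of_nonneg_of_sum_smul_eq hw hMi hNi (hM.1 i).sum_eq_one (hN.1 i).sum_eq_one (h i)
  obtain _ | m := n
  · exact Subsingleton.elim M N
  have hzero : M 0 = N 0 := row_eq 0 hM.row_zero_nonneg hN.row_zero_nonneg
  have hlast : M (Fin.last m) = N (Fin.last m) :=
    row_eq (Fin.last m) hM.row_last_nonneg hN.row_last_nonneg
  have boundary (i : Fin (m + 1)) (hi : i ≠ 1) : i = 0 ∨ i = Fin.last m := by
    grind
  refine hM.eq_of_forall_row_ne hN 1 fun i hi => ?_
  obtain rfl | rfl := boundary i hi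
  exacts [hzero, hlast]

end IsASM

theorem IsASHM.isASM_plane {n : ℕ} {A : Fin n → Fin n → Fin n → ℤ} (hA : IsASHM A) (j : Fin n) :
    IsASM fun i k => A i j k :=
  ⟨fun i => hA.2.2 i j, fun k => hA.1 j k⟩

theorem ashl_injective_of_small_general {n : ℕ} (hn : n ≤ 3) {ι G : Type*} [AddCommGroup G]
    {w : Fin n → G} (hw : Function.Injective w) {A B : Fin n → ι → Fin n → ℤ}
    (hA : ∀ j, IsASM fun i k => A i j k) (hB : ∀ j, IsASM fun i k => B i j k)
    (h : ∀ i j, ∑ k, A i j k • w k = ∑ k, B i j k • w k) : A = B := by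
  funext i j
  exact congrFun ((hA j).eq_of_sum_smul_eq hn hw (hB j) (h · j)) i

theorem ashl_injective_of_small {n : ℕ} (hn : n ≤ 3)
    (A B : Fin n → Fin n → Fin n → ℤ) (hA : IsASHM A) (hB : IsASHM B)
    (h : ashl A = ashl B) : A = B := by
  have hw : Function.Injective fun k : Fin n => ((k : ℕ) + 1 : ℤ) :=
    (add_left_injective 1).comp (Nat.cast_injective.comp Fin.val_injective)
  exact ashl_injective_of_small_general hn hw hA.isASM_plane hB.isASM_plane fun i j => by
    simpa only [ashl, smul_eq_mul, mul_comm] using congrFun₂ h i j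
end

section
/- For every odd n ≥ 7 there exists an n × n × n alternating sign hypermatrix A such that the value (n+1)/2 occurs exactly (n² + 4n − 19)/2 times as an entry of L(A). -/
open Finset

/-!
In coordinates centred at the middle cell, with `n = 2 * m + 1`, fill the octahedron
`|x| + |y| + |z| ≤ m` with alternating signs, so that every plane carries a diamond ASM. Since a
vertical line has entry sum `1`, its entry in the ASHL is `m + 1` plus its first moment about the
middle plane. The lines through the diamond `|x| + |y| ≤ m` are symmetric and have moment zero.
Of the other lines, those on the shell `|x| + |y| = m + 1` and off its border cells are `+1, -1, +1`
at heights `1 - m, 1, m`, or upside down, and again have moment `(1 - m) - 1 + m = 0`; every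
remaining line is a single `+1` off the middle plane. Hence the middle value occurs
`(m + 1) ^ 2 + m ^ 2 + 4 * (m - 2) = (n ^ 2 + 4 * n - 19) / 2` times.
-/

/-- The sign pattern `+1, -1, +1, …` of length `l`. -/
def alternatingSigns (l : ℕ) : List ℤ :=
  (List.range l).map ((-1 : ℤ) ^ ·)

theorem alternatingSigns_succ (l : ℕ) :
    alternatingSigns (l + 1) = alternatingSigns l ++ [(-1) ^ l] := by
  simp [alternatingSigns, List.range_succ]

theorem sum_alternatingSigns (l : ℕ) :
    (alternatingSigns l).sum = if Even l then 0 else 1 := by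
  rw [← neg_one_geom_sum]
  rfl

theorem altLine_iff {n : ℕ} {f : Fin n → ℤ} :
    AltLine f ↔ ∃ l, Odd l ∧ nonzeroList f = alternatingSigns l := by
  constructor
  · rintro ⟨hne, hget, hlast⟩
    have hsigns : nonzeroList f = alternatingSigns (nonzeroList f).length :=
      List.ext_getElem (by simp [alternatingSigns]) fun i hi _ ↦ by
        simpa [alternatingSigns] using hget i hi
    obtain ⟨l, hl⟩ := Nat.exists_eq_succ_of_ne_zero (List.length_pos_iff.2 hne).ne'
    rw [hl] at hsigns
    refine ⟨l + 1, ?_, hsigns⟩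
    rw [hsigns, alternatingSigns_succ, List.getLast?_concat, Option.some_inj] at hlast
    exact Even.add_one (by simpa [neg_one_pow_eq_one_iff_even] using hlast)
  · rintro ⟨l, ⟨k, rfl⟩, hl⟩
    rw [AltLine, hl]
    refine ⟨by simp [alternatingSigns], by simp [alternatingSigns], ?_⟩
    rw [alternatingSigns_succ, List.getLast?_concat, (even_two_mul k).neg_one_pow]

theorem AltLine.sum_eq_one_s18 {n : ℕ} {f : Fin n → ℤ} (hf : AltLine f) : ∑ i, f i = 1 := by
  obtain ⟨l, hl, hfl⟩ := altLine_iff.1 hf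
  rw [← sum_nonzeroList, hfl, sum_alternatingSigns, if_neg (Nat.not_even_iff_odd.2 hl)]

theorem nonzeroList_castSucc_last {n : ℕ} (f : Fin (n + 1) → ℤ) :
    nonzeroList f = nonzeroList (fun i : Fin n ↦ f i.castSucc) ++
      if f (Fin.last n) = 0 then [] else [f (Fin.last n)] := by
  by_cases h : f (Fin.last n) = 0 <;>
    simp [nonzeroList, List.finRange_succ_last, Function.comp_def, h]

theorem exists_nonzeroList_eq_alternatingSigns {n : ℕ} (f : Fin n → ℤ) (s : ℕ → ℤ)
    (hs : ∀ i, s i = 0 ∨ s i = 1) (hs0 : s 0 = 0) (hf : ∀ i : Fin n, f i = s (i + 1) - s i) :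
    ∃ l : ℕ, nonzeroList f = alternatingSigns l ∧ s n = l % 2 := by
  induction n with
  | zero => exact ⟨0, rfl, by simpa using hs0⟩
  | succ n ih =>
    obtain ⟨l, hl, hsl⟩ := ih (fun i ↦ f i.castSucc) fun i ↦ by simpa using hf i.castSucc
    have hlast : f (Fin.last n) = s (n + 1) - s n := by simpa using hf (Fin.last n)
    rw [nonzeroList_castSucc_last, hl]
    rcases eq_or_ne (f (Fin.last n)) 0 with h | h
    · exact ⟨l, by simp [h], by omega⟩
    · have hsign : f (Fin.last n) = (-1) ^ l := by
        have hs_next := hs (n + 1)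
        rcases Nat.even_or_odd l with hl | hl
        · rw [hl.neg_one_pow]
          have := Nat.even_iff.1 hl
          omega
        · rw [hl.neg_one_pow]
          have := Nat.odd_iff.1 hl
          omega
      refine ⟨l + 1, by rw [if_neg h, alternatingSigns_succ, hsign], ?_⟩
      have := hs (n + 1)
      push_cast
      omega

/-- The line `g (-m), …, g m` is alternating, with `+1` first and last: its partial sums up to and
including `x` are the values at `x` of the indicator function of a set `S`. Whether `S` contains
integers outside `[-m - 1, m]` is irrelevant. -/
def AlternatesOn (m : ℤ) (g : ℤ → ℤ) : Prop :=
  ∃ S : Set ℤ, -m - 1 ∉ S ∧ m ∈ S ∧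
    ∀ x, -m ≤ x → x ≤ m → g x = S.indicator 1 x - S.indicator 1 (x - 1)

namespace AlternatesOn

variable {m : ℤ} {g g' : ℤ → ℤ}

theorem congr (hg : AlternatesOn m g) (h : ∀ x, -m ≤ x → x ≤ m → g' x = g x) :
    AlternatesOn m g' := by
  obtain ⟨S, hS, hmS, hgS⟩ := hg
  exact ⟨S, hS, hmS, fun x hx hx' ↦ (h x hx hx').trans (hgS x hx hx')⟩

theorem comp_neg (hg : AlternatesOn m g) : AlternatesOn m fun x ↦ g (-x) := by
  classical
  obtain ⟨S, hS, hmS, hgS⟩ := hg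
  refine ⟨{x | -x - 1 ∉ S}, by simpa using hmS, by simpa using hS, fun x hx hx' ↦ ?_⟩
  have hx_pred : -(x - 1) - 1 = -x := by ring
  simp only [hgS (-x) (by omega) (by omega), Set.indicator_apply, Set.mem_ofPred_eq, hx_pred,
    Pi.one_apply]
  split_ifs <;> simp_all

theorem comp_neg_iff : AlternatesOn m (fun x ↦ g (-x)) ↔ AlternatesOn m g :=
  ⟨fun h ↦ by simpa only [neg_neg] using h.comp_neg, comp_neg⟩

theorem single {c : ℤ} (hc : -m ≤ c) (hc' : c ≤ m) : AlternatesOn m (Pi.single c 1) := by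
  refine ⟨Set.Ici c, by rw [Set.mem_Ici]; omega, hc', fun x _ _ ↦ ?_⟩
  simp only [Pi.single_apply, Set.indicator_apply, Set.mem_Ici, Pi.one_apply]
  split_ifs <;> omega

theorem sub_single_add_single (hg : AlternatesOn m g) {b c : ℤ} (hb : -m ≤ b) (hbc : b < c)
    (hc : c ≤ m) (hg0 : ∀ x, b ≤ x → g x = 0) :
    AlternatesOn m (g - Pi.single b 1 + Pi.single c 1) := by
  obtain ⟨S, hS, hmS, hgS⟩ := hg
  have mem_S : ∀ x ≤ m, b - 1 ≤ x → x ∈ S := fun x hx ↦ by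
    induction x, hx using Int.leInductionDown with
    | base => exact fun _ ↦ hmS
    | pred x hx ih =>
      intro hbx
      by_contra hxS
      have hgx := hgS x (by omega) hx
      rw [hg0 x (by omega), Set.indicator_of_mem (ih (by omega)),
        Set.indicator_of_notMem hxS] at hgx
      simp at hgx
  have hsub : Set.Ico b c ⊆ S := fun x hx ↦ mem_S x (by grind) (by grind)
  refine ⟨S \ Set.Ico b c, fun h ↦ hS h.1, ⟨hmS, fun h ↦ hc.not_gt h.2⟩, fun x hx hx' ↦ ?_⟩
  have hIco : (Set.Ico b c).indicator (1 : ℤ → ℤ) x - (Set.Ico b c).indicator 1 (x - 1) =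
      (if x = b then 1 else 0) - if x = c then 1 else 0 := by
    simp only [Set.indicator_apply, Set.mem_Ico, Pi.one_apply]
    split_ifs <;> omega
  simp only [Pi.add_apply, Pi.sub_apply, Pi.single_apply, hgS x hx hx',
    Set.indicator_sdiff hsub]
  linarith

end AlternatesOn

/-- The line `+1, -1, …, +1` on `[-r, r]`, extended by zero: the rows of a diamond ASM. -/
def altRun (r t : ℤ) : ℤ :=
  if |t| ≤ r then if 2 ∣ t + r then 1 else -1 else 0

theorem altRun_neg (r t : ℤ) : altRun r (-t) = altRun r t := by
  have h : 2 ∣ -t + r ↔ 2 ∣ t + r := by omega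
  simp only [altRun, abs_neg, h]

theorem altRun_eq_zero {r t : ℤ} (h : r < t) : altRun r t = 0 :=
  if_neg (by rw [abs_le]; omega)

theorem altRun_sub_abs_comm (m t u : ℤ) : altRun (m - |t|) u = altRun (m - |u|) t := by
  simp only [altRun, Int.abs_eq_natAbs]
  split_ifs <;> omega

theorem alternatesOn_altRun {m r : ℤ} (hr : 0 ≤ r) (hrm : r ≤ m) :
    AlternatesOn m (altRun r) := by
  refine ⟨{x | r ≤ x ∨ (-r ≤ x ∧ 2 ∣ x + r)}, by rw [Set.mem_ofPred_eq]; omega, Or.inl hrm,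
    fun x _ _ ↦ ?_⟩
  simp only [altRun, Int.abs_eq_natAbs, Set.indicator_apply, Set.mem_ofPred_eq, Pi.one_apply]
  split_ifs <;> omega

/-- The height of the last `+1` on a vertical line at distance `d = |x| + |y| > m` from the axis,
namely `2 * m + 1 - d` except that `d = m + 2` and `d = 2 * m` are interchanged. The interchange
makes up, in the rows at heights `1` and `m - 1`, for the two extra entries of the three-entry lines
in `outerLine`. -/
def peakHeight (m d : ℤ) : ℤ :=
  if d = m + 2 then 1 else if d = 2 * m then m - 1 else 2 * m + 1 - d

/-- The vertical line above a cell `(a, b)` with `0 ≤ a, b ≤ m` outside the diamond `a + b ≤ m`. -/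
def outerLine (m a b : ℤ) : ℤ → ℤ :=
  if a + b = m + 1 ∧ a < m ∧ b < m then Pi.single (1 - m) 1 - Pi.single 1 1 + Pi.single m 1
  else Pi.single (peakHeight m (a + b)) 1

/-- The entries of the hypermatrix, with coordinates ranging over `[-m, m]`. The octahedron
`|x| + |y| + |z| ≤ m` collects the diamond ASMs of all planes; reflecting `x` or `y` outside the
diamond turns a vertical line upside down, which interchanges diagonals and antidiagonals. -/
def hyperEntry (m x y z : ℤ) : ℤ :=
  if |x| + |y| ≤ m then altRun (m - |x| - |y|) z
  else outerLine m |x| |y| (x.sign * y.sign * z)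

theorem outerLine_comm (m a b : ℤ) : outerLine m a b = outerLine m b a := by
  simp only [outerLine, add_comm a b, and_comm (a := a < m)]

theorem hyperEntry_comm (m x y z : ℤ) : hyperEntry m x y z = hyperEntry m y x z := by
  simp only [hyperEntry, add_comm |x|, sub_right_comm m |x|, outerLine_comm m |x|,
    mul_comm x.sign]

theorem hyperEntry_neg_left (m x y z : ℤ) : hyperEntry m (-x) y z = hyperEntry m x y (-z) := by
  simp only [hyperEntry, abs_neg, Int.sign_neg, altRun_neg, neg_mul, mul_neg]

theorem hyperEntry_neg_middle (m x y z : ℤ) : hyperEntry m x (-y) z = hyperEntry m x y (-z) := by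
  rw [hyperEntry_comm, hyperEntry_neg_left, hyperEntry_comm]

theorem hyperEntry_eq_outerLine {m x y z : ℤ} (hx : 0 < x) (hy : 0 < y) (h : m < x + y) :
    hyperEntry m x y z = outerLine m x y z := by
  rw [hyperEntry, abs_of_pos hx, abs_of_pos hy, if_neg (by omega), Int.sign_eq_one_of_pos hx,
    Int.sign_eq_one_of_pos hy, one_mul, one_mul]

theorem hyperEntry_eq_altRun {m x y z : ℤ} (h : |x| + |y| ≤ m) :
    hyperEntry m x y z = altRun (m - |y| - |z|) x := by
  rw [hyperEntry, if_pos h, sub_right_comm, altRun_sub_abs_comm]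

section Lines

variable {m : ℤ}

theorem peakHeight_mem (hm : 2 ≤ m) {d : ℤ} (hd : m < d) (hdm : d ≤ 2 * m) :
    1 ≤ peakHeight m d ∧ peakHeight m d ≤ m := by
  unfold peakHeight
  split_ifs <;> omega

theorem hyperEntry_eq_outerLine_or {x y : ℤ} (h : m < |x| + |y|) (hx : |x| ≤ m) (hy : |y| ≤ m) :
    (hyperEntry m x y = fun z ↦ outerLine m |x| |y| z) ∨
      hyperEntry m x y = fun z ↦ outerLine m |x| |y| (-z) := by
  have hx0 : x ≠ 0 := by rintro rfl; rw [abs_zero, zero_add] at h; omega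
  have hy0 : y ≠ 0 := by rintro rfl; rw [abs_zero, add_zero] at h; omega
  have hentry : hyperEntry m x y = fun z ↦ outerLine m |x| |y| (x.sign * y.sign * z) :=
    funext fun z ↦ if_neg h.not_ge
  rw [hentry]
  rcases hx0.lt_or_gt with hx | hx <;> rcases hy0.lt_or_gt with hy | hy <;>
    simp [Int.sign_eq_neg_one_of_neg, Int.sign_eq_one_of_pos, hx, hy]

theorem alternatesOn_outerLine (hm : 2 ≤ m) {a b : ℤ} (h : m < a + b) (ha : a ≤ m) (hb : b ≤ m) :
    AlternatesOn m (outerLine m a b) := by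
  unfold outerLine
  split_ifs with hd
  · refine (AlternatesOn.single (by omega) (by omega)).sub_single_add_single (by omega) (by omega)
      le_rfl fun x hx ↦ ?_
    rw [Pi.single_apply, if_neg (by omega)]
  · obtain ⟨hpos, hle⟩ := peakHeight_mem hm h (by omega)
    exact AlternatesOn.single (by omega) hle

theorem alternatesOn_hyperEntry_vertical (hm : 2 ≤ m) {x y : ℤ} (hx : |x| ≤ m) (hy : |y| ≤ m) :
    AlternatesOn m (hyperEntry m x y) := by
  rcases le_or_gt (|x| + |y|) m with h | h
  · have hrun : AlternatesOn m (altRun (m - |x| - |y|)) :=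
      alternatesOn_altRun (by omega) (by linarith [abs_nonneg x, abs_nonneg y])
    exact hrun.congr fun z _ _ ↦ if_pos h
  · have houter := alternatesOn_outerLine hm h hx hy
    rcases hyperEntry_eq_outerLine_or h hx hy with h | h <;> rw [h]
    · exact houter
    · exact houter.comp_neg

theorem hyperEntry_eq_outerLine_neg {x y z : ℤ} (hx : x < 0) (hy : 0 < y) (h : m < -x + y) :
    hyperEntry m x y z = outerLine m (-x) y (-z) := by
  rw [← hyperEntry_eq_outerLine (by omega) hy h, hyperEntry_neg_left, neg_neg]

theorem hyperEntry_row_eq {y z : ℤ} (hy : 0 ≤ y) (hym : y ≤ m) (hz : 0 ≤ z) {g : ℤ → ℤ}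
    (h_run : ∀ x, |x| + y ≤ m → altRun (m - y - z) x = g x)
    (h_pos : ∀ x, 0 < x → x ≤ m → m < x + y → outerLine m x y z = g x)
    (h_neg : ∀ x, x < 0 → -m ≤ x → m < -x + y → outerLine m (-x) y (-z) = g x)
    (x : ℤ) (hx : -m ≤ x) (hx' : x ≤ m) : hyperEntry m x y z = g x := by
  rcases le_or_gt (|x| + y) m with h | h
  · rw [← h_run x h, hyperEntry_eq_altRun (by rwa [abs_of_nonneg hy]), abs_of_nonneg hy,
      abs_of_nonneg hz]
  · rcases lt_trichotomy x 0 with hx0 | rfl | hx0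
    · rw [abs_of_neg hx0] at h
      rw [← h_neg x hx0 hx h, hyperEntry_eq_outerLine_neg hx0 (by omega) h]
    · rw [abs_zero] at h
      omega
    · rw [abs_of_pos hx0] at h
      rw [← h_pos x hx0 hx' h, hyperEntry_eq_outerLine hx0 (by omega) h]

theorem alternatesOn_row_diamond (hm : 2 ≤ m) {y z : ℤ} (hy : 0 ≤ y) (hz : 0 ≤ z)
    (hyz : y + z ≤ m) (h : z = 1 → y ≤ 1) : AlternatesOn m fun x ↦ hyperEntry m x y z := by
  refine (alternatesOn_altRun (r := m - y - z) (by omega) (by omega)).congr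
    (hyperEntry_row_eq hy (by omega) hz (fun _ _ ↦ rfl) (fun x hx hx' hxy ↦ ?_)
      fun x hx hx' hxy ↦ ?_) <;>
  · simp only [outerLine, peakHeight, altRun, Int.abs_eq_natAbs, ite_apply, Pi.add_apply,
      Pi.sub_apply, Pi.single_apply]
    split_ifs <;> omega

theorem alternatesOn_row_extended_diamond {y : ℤ} (hy : 2 ≤ y) (hym : y < m) :
    AlternatesOn m fun x ↦ hyperEntry m x y 1 := by
  have hrun : AlternatesOn m (altRun (m - y - 1)) := alternatesOn_altRun (by omega) (by omega)
  refine (hrun.sub_single_add_single (b := m + 1 - y) (c := m + 2 - y) (by omega) (by omega)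
    (by omega) fun x hx ↦ altRun_eq_zero (by omega)).congr
    (hyperEntry_row_eq (by omega) hym.le (by omega) (fun x hx ↦ ?_) (fun x hx hx' hxy ↦ ?_)
      fun x hx hx' hxy ↦ ?_)
  · have hxm : x ≤ m - y := by linarith [le_abs_self x]
    rw [Pi.add_apply, Pi.sub_apply, Pi.single_eq_of_ne (by omega), Pi.single_eq_of_ne (by omega),
      sub_zero, add_zero]
  all_goals
    simp only [outerLine, peakHeight, altRun, Int.abs_eq_natAbs, ite_apply, Pi.add_apply,
      Pi.sub_apply, Pi.single_apply]
    split_ifs <;> first | contradiction | omega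

theorem alternatesOn_row_off_diamond (hm : 2 ≤ m) {y z : ℤ} (hym : y ≤ m) (hzm : z ≤ m)
    (hyz : m < y + z) : AlternatesOn m fun x ↦ hyperEntry m x y z := by
  -- `c` solves `peakHeight m (c + y) = z`, unless `z = m - 1` and `y < m`; then the row meets the
  -- lowest entry of a reflected three-entry line.
  obtain ⟨c, hc⟩ : ∃ c, c = if z = 1 then 2 else if z = m - 1 then if y = m then m else y - m - 1
      else 2 * m + 1 - z - y := ⟨_, rfl⟩
  have hc_mem : -m ≤ c ∧ c ≤ m := by
    rw [hc]
    split_ifs <;> omega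
  refine (AlternatesOn.single hc_mem.1 hc_mem.2).congr
    (hyperEntry_row_eq (by omega) hym (by omega) (fun x hx ↦ ?_) (fun x hx hx' _ ↦ ?_)
      fun x hx hx' _ ↦ ?_)
  · have hxm : x ≤ m - y := by linarith [le_abs_self x]
    have hxm' : y - m ≤ x := by linarith [neg_abs_le x]
    rw [altRun, if_neg (by linarith [abs_nonneg x]), Pi.single_eq_of_ne]
    split_ifs at hc <;> omega
  all_goals
    simp only [outerLine, peakHeight, ite_apply, Pi.add_apply, Pi.sub_apply, Pi.single_apply]
    split_ifs at hc ⊢ <;> omega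

theorem alternatesOn_hyperEntry_row (hm : 2 ≤ m) {y z : ℤ} (hy : |y| ≤ m) (hz : |z| ≤ m) :
    AlternatesOn m fun x ↦ hyperEntry m x y z := by
  have neg_z : ∀ y z, AlternatesOn m (fun x ↦ hyperEntry m x y (-z)) ↔
      AlternatesOn m fun x ↦ hyperEntry m x y z := fun y z ↦ by
    simpa only [hyperEntry_neg_left] using
      AlternatesOn.comp_neg_iff (m := m) (g := fun x ↦ hyperEntry m x y z)
  have neg_y : ∀ y z, AlternatesOn m (fun x ↦ hyperEntry m x (-y) z) ↔
      AlternatesOn m fun x ↦ hyperEntry m x y z := fun y z ↦ by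
    simpa only [hyperEntry_neg_middle] using neg_z y z
  wlog hy0 : 0 ≤ y generalizing y
  · exact (neg_y y z).1 (this (by rwa [abs_neg]) (by omega))
  wlog hz0 : 0 ≤ z generalizing z
  · exact (neg_z y z).1 (this (by rwa [abs_neg]) (by omega))
  rw [abs_of_nonneg hy0] at hy
  rw [abs_of_nonneg hz0] at hz
  rcases lt_or_ge m (y + z) with hyz | hyz
  · exact alternatesOn_row_off_diamond hm hy hz hyz
  · by_cases h : z = 1 ∧ 2 ≤ y
    · obtain ⟨rfl, hy2⟩ := h
      exact alternatesOn_row_extended_diamond hy2 (by omega)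
    · exact alternatesOn_row_diamond hm hy0 hz0 hyz (by omega)

end Lines

section Centered

variable {m : ℕ}

/-- The coordinate in `[-m, m]` of an index in `{0, …, 2 * m}`. -/
def centered (i : Fin (2 * m + 1)) : ℤ :=
  (i : ℕ) - m

theorem abs_centered_le (i : Fin (2 * m + 1)) : |centered i| ≤ m := by
  rw [centered, abs_le]
  omega

theorem sum_centered {M : Type*} [AddCommMonoid M] (g : ℤ → M) :
    ∑ i : Fin (2 * m + 1), g (centered i) = ∑ x ∈ Icc (-m : ℤ) m, g x := by
  refine Finset.sum_bij (fun i _ ↦ centered i) (fun i _ ↦ mem_Icc.2 (abs_le.1 (abs_centered_le i)))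
    (fun i _ j _ h ↦ Fin.ext (by simpa [centered] using h)) (fun x hx ↦ ?_) fun _ _ ↦ rfl
  rw [mem_Icc] at hx
  exact ⟨⟨(x + m).toNat, by omega⟩, mem_univ _, by simp only [centered]; omega⟩

theorem AlternatesOn.altLine {g : ℤ → ℤ} (hg : AlternatesOn m g) :
    AltLine fun i : Fin (2 * m + 1) ↦ g (centered i) := by
  classical
  obtain ⟨S, hS, hmS, hgS⟩ := hg
  let s (k : ℕ) : ℤ := S.indicator 1 ((k : ℤ) - m - 1)
  have hs : ∀ k, s k = 0 ∨ s k = 1 := fun k ↦ Set.indicator_eq_zero_or_self S 1 _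
  have hs0 : s 0 = 0 := Set.indicator_of_notMem (by simpa using hS) 1
  have hgs : ∀ i : Fin (2 * m + 1), g (centered i) = s (i + 1) - s i := fun i ↦ by
    have hi := abs_le.1 (abs_centered_le i)
    rw [hgS _ hi.1 hi.2]
    congr 2
    rw [centered]
    push_cast
    ring
  obtain ⟨l, hl, hsl⟩ := exists_nonzeroList_eq_alternatingSigns _ s hs hs0 hgs
  have hs_last : s (2 * m + 1) = 1 :=
    Set.indicator_of_mem (by rw [show ((2 * m + 1 : ℕ) : ℤ) - m - 1 = m by omega]; exact hmS) 1
  exact altLine_iff.2 ⟨l, Nat.odd_iff.2 (by omega), hl⟩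

theorem ashl_eq_add_sum_centered {A : Fin (2 * m + 1) → Fin (2 * m + 1) → Fin (2 * m + 1) → ℤ}
    (hA : IsASHM A) (i j : Fin (2 * m + 1)) :
    ashl A i j = m + 1 + ∑ k, centered k * A i j k := by
  calc ashl A i j = ∑ k, ((m + 1) * A i j k + centered k * A i j k) :=
        sum_congr rfl fun k _ ↦ by rw [centered]; ring
    _ = m + 1 + ∑ k, centered k * A i j k := by
        rw [sum_add_distrib, ← mul_sum, (hA.2.2 i j).sum_eq_one_s18, mul_one]

/-- The hypermatrix of order `2 * m + 1` with entries `hyperEntry`. -/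
def hyperMatrix (m : ℕ) (i j k : Fin (2 * m + 1)) : ℤ :=
  hyperEntry m (centered i) (centered j) (centered k)

theorem isASHM_hyperMatrix (hm : 2 ≤ m) : IsASHM (hyperMatrix m) := by
  have hm' : (2 : ℤ) ≤ m := mod_cast hm
  have row (j k : Fin (2 * m + 1)) : AltLine fun i ↦ hyperMatrix m i j k :=
    (alternatesOn_hyperEntry_row hm' (abs_centered_le j) (abs_centered_le k)).altLine
  refine ⟨row, fun i k ↦ ?_, fun i j ↦ ?_⟩
  · simpa only [hyperMatrix, hyperEntry_comm m (centered i)] using row i k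
  · exact (alternatesOn_hyperEntry_vertical hm' (abs_centered_le i) (abs_centered_le j)).altLine

end Centered

/-- The first moment about the middle plane of a vertical line `g`. -/
noncomputable def moment (m : ℤ) (g : ℤ → ℤ) : ℤ :=
  ∑ z ∈ Icc (-m) m, z * g z

section Moment

variable {m : ℤ}

theorem moment_comp_neg (g : ℤ → ℤ) : moment m (fun z ↦ g (-z)) = -moment m g := by
  rw [moment, moment, ← sum_neg_distrib]
  refine sum_equiv (Equiv.neg ℤ) (fun z ↦ ?_) fun z _ ↦ ?_
  · simp only [mem_Icc, Equiv.neg_apply]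
    omega
  · rw [Equiv.neg_apply, neg_mul, neg_neg]

theorem moment_altRun (r : ℤ) : moment m (altRun r) = 0 := by
  have h := moment_comp_neg (m := m) (altRun r)
  simp only [altRun_neg] at h
  exact self_eq_neg.1 h

theorem moment_single {c : ℤ} (hc : -m ≤ c) (hc' : c ≤ m) : moment m (Pi.single c 1) = c := by
  simp [moment, Pi.single_apply, hc, hc']

/-- The cells `(x, y)` above which the vertical line of the hypermatrix has moment zero: the diamond
`|x| + |y| ≤ m`, and the shell `|x| + |y| = m + 1` without its border cells. -/
def IsBalanced (m x y : ℤ) : Prop :=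
  |x| + |y| ≤ m ∨ |x| + |y| = m + 1 ∧ |x| < m ∧ |y| < m

instance (m x y : ℤ) : Decidable (IsBalanced m x y) :=
  inferInstanceAs (Decidable (_ ∨ _))

theorem moment_outerLine_eq_zero_iff (hm : 2 ≤ m) {a b : ℤ} (h : m < a + b) (ha : a ≤ m)
    (hb : b ≤ m) : moment m (outerLine m a b) = 0 ↔ a + b = m + 1 ∧ a < m ∧ b < m := by
  unfold outerLine
  split_ifs with hd
  · have moment_eq : moment m (Pi.single (1 - m) 1 - Pi.single 1 1 + Pi.single m 1) =
        moment m (Pi.single (1 - m) 1) - moment m (Pi.single 1 1) + moment m (Pi.single m 1) := by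
      simp only [moment, Pi.add_apply, Pi.sub_apply, mul_add, mul_sub, sum_add_distrib,
        sum_sub_distrib]
    rw [moment_eq, moment_single (by omega) (by omega), moment_single (by omega) (by omega),
      moment_single (by omega) le_rfl]
    exact iff_of_true (by ring) hd
  · obtain ⟨hpos, hle⟩ := peakHeight_mem hm h (by omega)
    rw [moment_single (by omega) hle]
    exact iff_of_false (by omega) hd

theorem moment_hyperEntry_eq_zero_iff (hm : 2 ≤ m) {x y : ℤ} (hx : |x| ≤ m) (hy : |y| ≤ m) :
    moment m (hyperEntry m x y) = 0 ↔ IsBalanced m x y := by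
  rcases le_or_gt (|x| + |y|) m with h | h
  · have hrun : hyperEntry m x y = altRun (m - |x| - |y|) := funext fun z ↦ if_pos h
    exact iff_of_true (hrun ▸ moment_altRun _) (Or.inl h)
  · have houter : moment m (hyperEntry m x y) = 0 ↔ moment m (outerLine m |x| |y|) = 0 := by
      rcases hyperEntry_eq_outerLine_or h hx hy with h | h
      · rw [h]
      · rw [h, moment_comp_neg, neg_eq_zero]
    rw [houter, moment_outerLine_eq_zero_iff hm h hx hy, IsBalanced, or_iff_right h.not_ge]

end Moment

section Count

variable {m : ℕ}

theorem ashl_hyperMatrix_eq_iff (hm : 2 ≤ m) (i j : Fin (2 * m + 1)) :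
    ashl (hyperMatrix m) i j = m + 1 ↔ IsBalanced m (centered i) (centered j) := by
  have hmoment : ∑ k, centered k * hyperMatrix m i j k =
      moment m (hyperEntry m (centered i) (centered j)) :=
    sum_centered fun z ↦ z * hyperEntry m (centered i) (centered j) z
  rw [ashl_eq_add_sum_centered (isASHM_hyperMatrix hm), hmoment, add_eq_left,
    moment_hyperEntry_eq_zero_iff (mod_cast hm) (abs_centered_le i) (abs_centered_le j)]

theorem card_isBalanced_row {x : ℤ} (hx : |x| ≤ m) :
    (#{y ∈ Icc (-m : ℤ) m | IsBalanced m x y} : ℤ) =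
      2 * (m - |x|) + 1 + if 2 ≤ |x| ∧ |x| < m then 2 else 0 := by
  have hrow : {y ∈ Icc (-m : ℤ) m | IsBalanced m x y} =
      Icc (-(m - |x| + if 2 ≤ |x| ∧ |x| < m then 1 else 0))
        (m - |x| + if 2 ≤ |x| ∧ |x| < m then 1 else 0) := by
    ext y
    simp only [mem_filter, mem_Icc, IsBalanced, Int.abs_eq_natAbs]
    split_ifs <;> omega
  rw [hrow, Int.card_Icc]
  split_ifs <;> omega

theorem sum_card_isBalanced_row (hm : 2 ≤ m) :
    ∑ x ∈ Icc (-m : ℤ) m, (#{y ∈ Icc (-m : ℤ) m | IsBalanced m x y} : ℤ) =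
      2 * m ^ 2 + 6 * m - 7 := by
  have sum_odd : ∀ N : ℕ, ∑ k ∈ range N, (2 * ((m : ℤ) - k) + 1) = N * (2 * m + 2 - N) := by
    intro N
    induction N with
    | zero => simp
    | succ N ih =>
      rw [sum_range_succ, ih]
      push_cast
      ring
  have sum_two : ∑ k ∈ range (m + 1), (if 2 ≤ k ∧ k < m then 2 else 0 : ℤ) = 2 * (m - 2) := by
    have hfilter : {k ∈ range (m + 1) | 2 ≤ k ∧ k < m} = Ico 2 m := by
      ext k
      simp only [mem_filter, mem_range, mem_Ico]
      omega
    rw [← sum_filter, hfilter, sum_const, Nat.card_Ico, nsmul_eq_mul, Nat.cast_sub hm]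
    push_cast
    ring
  let f (x : ℤ) : ℤ := 2 * (m - |x|) + 1 + if 2 ≤ |x| ∧ |x| < m then 2 else 0
  have f_even : f.Even := fun x ↦ by simp only [f, abs_neg]
  calc ∑ x ∈ Icc (-m : ℤ) m, (#{y ∈ Icc (-m : ℤ) m | IsBalanced m x y} : ℤ)
      = ∑ x ∈ Icc (-m : ℤ) m, f x :=
        sum_congr rfl fun x hx ↦ card_isBalanced_row (abs_le.2 (mem_Icc.1 hx))
    _ = 2 • ∑ k ∈ range (m + 1), f k - f 0 := sum_Icc_of_even_eq_range f_even m
    _ = 2 * m ^ 2 + 6 * m - 7 := by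
        simp only [f, Nat.abs_cast, Nat.ofNat_le_cast, Nat.cast_lt, sum_add_distrib, sum_two]
        rw [← sum_add_distrib, sum_odd]
        simp only [Nat.cast_add, Nat.cast_one, nsmul_eq_mul, Nat.cast_ofNat, abs_zero, sub_zero,
          Int.reduceLE, false_and, if_false, add_zero]
        ring

theorem card_isBalanced (hm : 2 ≤ m) :
    (#{p : Fin (2 * m + 1) × Fin (2 * m + 1) | IsBalanced m (centered p.1) (centered p.2)} : ℤ) =
      2 * m ^ 2 + 6 * m - 7 := by
  rw [← sum_card_isBalanced_row hm]
  simp only [card_filter, Nat.cast_sum, Fintype.sum_prod_type]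
  calc ∑ i : Fin (2 * m + 1), ∑ j : Fin (2 * m + 1),
        ((if IsBalanced m (centered i) (centered j) then 1 else 0 : ℕ) : ℤ)
      = ∑ i : Fin (2 * m + 1), ∑ y ∈ Icc (-m : ℤ) m,
          ((if IsBalanced m (centered i) y then 1 else 0 : ℕ) : ℤ) :=
        sum_congr rfl fun i _ ↦
          sum_centered fun y ↦ ((if IsBalanced m (centered i) y then 1 else 0 : ℕ) : ℤ)
    _ = ∑ x ∈ Icc (-m : ℤ) m, ∑ y ∈ Icc (-m : ℤ) m,
          ((if IsBalanced m x y then 1 else 0 : ℕ) : ℤ) :=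
        sum_centered fun x ↦ ∑ y ∈ Icc (-m : ℤ) m, ((if IsBalanced m x y then 1 else 0 : ℕ) : ℤ)

end Count

theorem ashl_repeated_value_odd_general (n : ℕ) (hodd : Odd n) (hn : 5 ≤ n) :
    ∃ A : Fin n → Fin n → Fin n → ℤ, IsASHM A ∧
      (Finset.univ.filter
        (fun p : Fin n × Fin n =>
          ashl A p.1 p.2 = (((n + 1) / 2 : ℕ) : ℤ))).card =
        (n ^ 2 + 4 * n - 19) / 2 := by
  obtain ⟨m, rfl⟩ := hodd
  have hm : 2 ≤ m := by omega
  have hmid : (((2 * m + 1 + 1) / 2 : ℕ) : ℤ) = m + 1 := by omega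
  have hcount : ((2 * m + 1) ^ 2 + 4 * (2 * m + 1) - 19) / 2 = 2 * m ^ 2 + 6 * m - 7 := by
    have hsq : (2 * m + 1) ^ 2 + 4 * (2 * m + 1) = 2 * (2 * m ^ 2 + 6 * m) + 5 := by ring
    omega
  refine ⟨hyperMatrix m, isASHM_hyperMatrix hm, ?_⟩
  simp only [hmid, ashl_hyperMatrix_eq_iff hm]
  rw [hcount]
  zify [show 7 ≤ 2 * m ^ 2 + 6 * m by nlinarith]
  exact card_isBalanced hm

theorem ashl_repeated_value_odd (n : ℕ) (hodd : Odd n) (hn : 7 ≤ n) :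
    ∃ A : Fin n → Fin n → Fin n → ℤ, IsASHM A ∧
      (Finset.univ.filter
        (fun p : Fin n × Fin n =>
          ashl A p.1 p.2 = (((n + 1) / 2 : ℕ) : ℤ))).card =
        (n ^ 2 + 4 * n - 19) / 2 := by
  exact ashl_repeated_value_odd_general n hodd (by omega)
end
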